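/- (Theorem 4, item 2.2) Suppose eTRS satisfies the Slater condition and (t*, λ*) with λ* ≥ 0 maximizes k(t,λ) := (Δ+1)λmin(D(t,λ)) − t − λc over t ∈ ℝ, λ ≥ 0, with λmin(D(t*,λ*)) = λmin(A). Let y = (y0, z0) ∈ ℝ × ℝⁿ be a unit-norm eigenvector of D(t*,λ*) corresponding to λmin(D(t*,λ*)) with y0 ≠ 0, and set x* := z0 / y0. Assume it is NOT the case that [λmin(A) < 0 is a simple eigenvalue of A, λ* > 0, and the system (A − λmin(A)·I)x = a − (λ*/2)b has two solutions x1, x2 with ‖x1‖² = Δ, ‖x2‖² = Δ and (bᵀx1 − c)(bᵀx2 − c) < 0]. Then strong duality holds for eTRS (p* = d*), and there exists z ∈ Null(A − λmin(A)·I) such that x* + z is a global optimal solution of eTRS. -/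

import Mathlib

open Matrix

/-- The smallest eigenvalue of a real (symmetric) matrix. -/
noncomputable def lambdaMin {ι : Type} [Fintype ι] (M : Matrix ι ι ℝ) : ℝ :=
  sInf {μ : ℝ | ∃ v : ι → ℝ, v ≠ 0 ∧ M.mulVec v = μ • v}

/-- The multiplicity of the smallest eigenvalue: the dimension of Null(M - λmin(M)·I). -/
noncomputable def eigMult {ι : Type} [Fintype ι] [DecidableEq ι] (M : Matrix ι ι ℝ) : ℕ :=
  Module.finrank ℝ (LinearMap.ker (M - lambdaMin M • (1 : Matrix ι ι ℝ)).mulVecLin)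

/-- The bordered matrix D(t) = [[t, -aᵀ],[-a, A]]. -/
noncomputable def borderD {n : ℕ} (A : Matrix (Fin n) (Fin n) ℝ) (a : Fin n → ℝ) (t : ℝ) :
    Matrix (Unit ⊕ Fin n) (Unit ⊕ Fin n) ℝ :=
  Matrix.fromBlocks (Matrix.of fun (_ : Unit) (_ : Unit) => t)
    (Matrix.of fun (_ : Unit) (j : Fin n) => -a j)
    (Matrix.of fun (i : Fin n) (_ : Unit) => -a i) A

/-- The bordered matrix D(t,λ) = [[t, (-a + (λ/2)b)ᵀ],[-a + (λ/2)b, A]]. -/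
noncomputable def borderD2 {n : ℕ} (A : Matrix (Fin n) (Fin n) ℝ) (a b : Fin n → ℝ)
    (t l : ℝ) : Matrix (Unit ⊕ Fin n) (Unit ⊕ Fin n) ℝ :=
  borderD A (fun j => a j - (l / 2) * b j) t

/-- The objective xᵀAx - 2aᵀx. -/
noncomputable def objQ {n : ℕ} (A : Matrix (Fin n) (Fin n) ℝ) (a : Fin n → ℝ)
    (x : Fin n → ℝ) : ℝ :=
  x ⬝ᵥ A.mulVec x - 2 * (a ⬝ᵥ x)

/-- The optimal value p* of eTRS. -/
noncomputable def pstar {n : ℕ} (A : Matrix (Fin n) (Fin n) ℝ) (a b : Fin n → ℝ)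
    (c Δ : ℝ) : ℝ :=
  sInf {v : ℝ | ∃ x : Fin n → ℝ, x ⬝ᵥ x ≤ Δ ∧ b ⬝ᵥ x ≤ c ∧ v = objQ A a x}

/-- The Lagrangian of eTRS. -/
noncomputable def lagr {n : ℕ} (A : Matrix (Fin n) (Fin n) ℝ) (a b : Fin n → ℝ)
    (c Δ : ℝ) (x : Fin n → ℝ) (l1 l2 : ℝ) : ℝ :=
  objQ A a x + l1 * (x ⬝ᵥ x - Δ) + l2 * (b ⬝ᵥ x - c)

/-- The Lagrangian dual value d* of eTRS:
the supremum over λ1, λ2 ≥ 0 of inf_x of the Lagrangian, encoded as the supremum of all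
values that are lower bounds of the Lagrangian for some admissible multipliers. -/
noncomputable def dstar {n : ℕ} (A : Matrix (Fin n) (Fin n) ℝ) (a b : Fin n → ℝ)
    (c Δ : ℝ) : ℝ :=
  sSup {v : ℝ | ∃ l1 l2 : ℝ, 0 ≤ l1 ∧ 0 ≤ l2 ∧ ∀ x : Fin n → ℝ, v ≤ lagr A a b c Δ x l1 l2}

/-- x is a global optimal solution of eTRS. -/
def isOptimal {n : ℕ} (A : Matrix (Fin n) (Fin n) ℝ) (a b : Fin n → ℝ)
    (c Δ : ℝ) (x : Fin n → ℝ) : Prop :=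
  x ⬝ᵥ x ≤ Δ ∧ b ⬝ᵥ x ≤ c ∧
    ∀ y : Fin n → ℝ, y ⬝ᵥ y ≤ Δ → b ⬝ᵥ y ≤ c → objQ A a x ≤ objQ A a y

/-- The dual objective k(t,λ) = (Δ+1)·λmin(D(t,λ)) - t - λc. -/
noncomputable def ktl {n : ℕ} (A : Matrix (Fin n) (Fin n) ℝ) (a b : Fin n → ℝ)
    (c Δ : ℝ) (t l : ℝ) : ℝ :=
  (Δ + 1) * lambdaMin (borderD2 A a b t l) - t - l * c
lemma lambdaMin_spec {ι : Type} [Fintype ι] [DecidableEq ι] [Nonempty ι] (M : Matrix ι ι ℝ)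
    (hM : M.IsHermitian) :
    (M - lambdaMin M • (1 : Matrix ι ι ℝ)).PosSemidef ∧
      ∃ v : ι → ℝ, v ⬝ᵥ v = 1 ∧ M.mulVec v = lambdaMin M • v := by
  have hcl : IsClosed {v : ι → ℝ | v ⬝ᵥ v = 1} := by
    apply isClosed_eq
    · unfold dotProduct; fun_prop
    · fun_prop
  have hcomp : IsCompact {v : ι → ℝ | v ⬝ᵥ v = 1} := by
    apply IsCompact.of_isClosed_subset
      (isCompact_univ_pi (fun _ : ι => isCompact_Icc (a := (-1:ℝ)) (b := 1))) hcl
    intro v hv i _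
    have h1 : v i * v i ≤ v ⬝ᵥ v :=
      Finset.single_le_sum (f := fun i => v i * v i) (fun j _ => mul_self_nonneg (v j))
        (Finset.mem_univ i)
    have hv' : v ⬝ᵥ v = 1 := hv
    rw [hv'] at h1
    constructor <;> nlinarith
  have hne : {v : ι → ℝ | v ⬝ᵥ v = 1}.Nonempty := by
    obtain ⟨i⟩ := (inferInstance : Nonempty ι)
    exact ⟨Pi.single i 1, by simp⟩
  obtain ⟨v, hv, hmin⟩ := hcomp.exists_isMinOn hne
    (f := fun v => v ⬝ᵥ M.mulVec v) (by unfold dotProduct mulVec dotProduct; fun_prop)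
  have hv : v ⬝ᵥ v = 1 := hv
  set m := v ⬝ᵥ M.mulVec v with hm
  have hray : ∀ w : ι → ℝ, m * (w ⬝ᵥ w) ≤ w ⬝ᵥ M.mulVec w := by
    intro w
    by_cases hw : w = 0
    · simp [hw]
    have hpos : 0 < w ⬝ᵥ w := by
      have h0 : 0 ≤ w ⬝ᵥ w := Finset.sum_nonneg fun j _ => mul_self_nonneg (w j)
      rcases h0.lt_or_eq with h | h
      · exact h
      · exact absurd (dotProduct_self_eq_zero.1 h.symm) hw
    have hs : 0 < Real.sqrt (w ⬝ᵥ w) := Real.sqrt_pos.2 hpos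
    have hss : Real.sqrt (w ⬝ᵥ w) * Real.sqrt (w ⬝ᵥ w) = w ⬝ᵥ w := Real.mul_self_sqrt hpos.le
    set s := Real.sqrt (w ⬝ᵥ w)
    have h := hmin (a := s⁻¹ • w) (by
      change (s⁻¹ • w) ⬝ᵥ (s⁻¹ • w) = 1
      rw [smul_dotProduct, dotProduct_smul, ← hss]
      simp only [smul_eq_mul]
      field_simp)
    have h' : m ≤ (s⁻¹ • w) ⬝ᵥ M.mulVec (s⁻¹ • w) := h
    rw [mulVec_smul, smul_dotProduct, dotProduct_smul, smul_eq_mul, smul_eq_mul] at h'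
    rw [← hss]
    have := mul_le_mul_of_nonneg_right h' (mul_self_nonneg s)
    have e : s⁻¹ * (s⁻¹ * w ⬝ᵥ M.mulVec w) * (s * s) = w ⬝ᵥ M.mulVec w := by field_simp
    linarith
  have hpsd : (M - m • (1 : Matrix ι ι ℝ)).PosSemidef := by
    refine .of_dotProduct_mulVec_nonneg (hM.sub ?_) ?_
    · simp [IsHermitian]
    · intro x
      have := hray x
      simp only [star_trivial, sub_mulVec, smul_mulVec, one_mulVec, dotProduct_sub,
        dotProduct_smul, smul_eq_mul]
      linarith
  have hev : M.mulVec v = m • v := by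
    have := (hpsd.dotProduct_mulVec_zero_iff v).1 (by
      simp only [star_trivial, sub_mulVec, smul_mulVec, one_mulVec, dotProduct_sub,
        dotProduct_smul, smul_eq_mul]
      rw [hv, ← hm]; ring)
    simpa only [sub_mulVec, smul_mulVec, one_mulVec, sub_eq_zero] using this
  have hl : lambdaMin M = m := by
    apply IsLeast.csInf_eq
    constructor
    · refine ⟨v, ?_, hev⟩
      rintro rfl
      simp at hv
    · rintro μ ⟨w, hw, hμ⟩
      have h := hray w
      rw [hμ, dotProduct_smul, smul_eq_mul] at h
      have hpos : 0 < w ⬝ᵥ w := by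
        have h0 : 0 ≤ w ⬝ᵥ w := Finset.sum_nonneg fun j _ => mul_self_nonneg (w j)
        rcases h0.lt_or_eq with h | h
        · exact h
        · exact absurd (dotProduct_self_eq_zero.1 h.symm) hw
      exact le_of_mul_le_mul_right h hpos
  rw [hl]
  exact ⟨hpsd, v, hv, hev⟩

lemma borderD2_isHermitian {n : ℕ} (A : Matrix (Fin n) (Fin n) ℝ) (hA : A.IsHermitian)
    (a b : Fin n → ℝ) (t l : ℝ) : (borderD2 A a b t l).IsHermitian := by
  unfold borderD2 borderD
  refine IsHermitian.fromBlocks ?_ ?_ hA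
  · ext; simp
  · ext; simp

lemma borderD2_shift {n : ℕ} (A : Matrix (Fin n) (Fin n) ℝ)
    (a b : Fin n → ℝ) (t l t' l' : ℝ) (v : Unit ⊕ Fin n → ℝ) :
    v ⬝ᵥ (borderD2 A a b (t + t') (l + l')).mulVec v = v ⬝ᵥ (borderD2 A a b t l).mulVec v
      + t' * (v (Sum.inl ()) * v (Sum.inl ()))
      + l' * ∑ i, b i * (v (Sum.inl ()) * v (Sum.inr i)) := by
  simp only [borderD2, borderD, dotProduct, mulVec, Fintype.sum_sum_type, Finset.univ_unique,
    Finset.sum_singleton, fromBlocks_apply₁₁, fromBlocks_apply₁₂, fromBlocks_apply₂₁,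
    fromBlocks_apply₂₂, of_apply, mul_add, Finset.sum_add_distrib, Finset.mul_sum]
  have e : (default : Unit) = () := rfl
  rw [e]
  have : ∀ s : ℝ, (∑ i, v (Sum.inl ()) * (-(a i - (l + l') / 2 * b i) * v (Sum.inr i)))
      = (∑ i, v (Sum.inl ()) * (-(a i - l / 2 * b i) * v (Sum.inr i)))
      + (1/2) * ∑ i, l' * (b i * (v (Sum.inl ()) * v (Sum.inr i))) := by
    intro _
    rw [Finset.mul_sum, ← Finset.sum_add_distrib]
    exact Finset.sum_congr rfl fun i _ => by ring
  rw [this 0]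
  have : ∀ s : ℝ, (∑ i, v (Sum.inr i) * (-(a i - (l + l') / 2 * b i) * v (Sum.inl ())))
      = (∑ i, v (Sum.inr i) * (-(a i - l / 2 * b i) * v (Sum.inl ())))
      + (1/2) * ∑ i, l' * (b i * (v (Sum.inl ()) * v (Sum.inr i))) := by
    intro _
    rw [Finset.mul_sum, ← Finset.sum_add_distrib]
    exact Finset.sum_congr rfl fun i _ => by ring
  rw [this 0]
  ring

lemma psd_minor {ι : Type} [Fintype ι] [DecidableEq ι] (Y : Matrix ι ι ℝ) (hY : Y.PosSemidef)
    (i j : ι) : Y i j * Y i j ≤ Y j j * Y i i := by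
  have hs : Y j i = Y i j := by simpa using hY.1.apply i j
  have hd : ∀ i, 0 ≤ Y i i := fun i => hY.diag_nonneg
  have key : ∀ x : ℝ, 0 ≤ Y j j * (x * x) + 2 * Y i j * x + Y i i := by
    intro x
    have h1 := hY.dotProduct_mulVec_nonneg (Pi.single i 1 + x • Pi.single j 1)
    simp [mulVec_add, mulVec_smul, add_dotProduct] at h1
    rw [hs] at h1
    nlinarith
  have := discrim_le_zero key
  unfold discrim at this
  nlinarith

lemma isCompact_density {ι : Type} [Fintype ι] [DecidableEq ι] :
    IsCompact {Y : Matrix ι ι ℝ | Y.PosSemidef ∧ Y.trace = 1} := by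
  have hcl : IsClosed {Y : Matrix ι ι ℝ | Y.PosSemidef ∧ Y.trace = 1} := by
    have : {Y : Matrix ι ι ℝ | Y.PosSemidef ∧ Y.trace = 1} =
        ({Y : Matrix ι ι ℝ | Yᴴ = Y} ∩ ⋂ x : ι → ℝ, {Y | 0 ≤ x ⬝ᵥ Y.mulVec x}) ∩
          {Y | Y.trace = 1} := by
      ext Y
      simp [posSemidef_iff_dotProduct_mulVec, IsHermitian]
    rw [this]
    refine ((isClosed_eq ?_ ?_).inter (isClosed_iInter fun x => isClosed_le ?_ ?_)).inter
      (isClosed_eq ?_ ?_)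
    · fun_prop
    · fun_prop
    · fun_prop
    · fun_prop
    · fun_prop
    · fun_prop
  apply IsCompact.of_isClosed_subset (s := Set.pi Set.univ fun _ : ι => Set.pi Set.univ fun _ : ι => Set.Icc (-1:ℝ) 1)
      (isCompact_univ_pi (fun _ : ι => isCompact_univ_pi fun _ : ι => isCompact_Icc)) hcl
  rintro Y ⟨hY, ht⟩ i _ j _
  have hd : ∀ i, 0 ≤ Y i i := fun i => hY.diag_nonneg
  have hd1 : ∀ i, Y i i ≤ 1 := fun i => by
    rw [← ht]
    exact Finset.single_le_sum (f := fun i => Y i i) (fun j _ => hd j) (Finset.mem_univ i)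
  have h1 := psd_minor Y hY i j
  have := hd i; have := hd j; have := hd1 i; have := hd1 j
  have h2 : Y j j * Y i i ≤ 1 := by nlinarith
  have h3 : Y i j * Y i j ≤ 1 := h1.trans h2
  constructor <;> nlinarith

open scoped MatrixOrder in
lemma psd_exists_sqrt {ι : Type} [Fintype ι] [DecidableEq ι] (M : Matrix ι ι ℝ)
    (hM : M.PosSemidef) : ∃ B : Matrix ι ι ℝ, M = Bᴴ * B := by
  obtain ⟨B, hB⟩ := CStarAlgebra.nonneg_iff_eq_star_mul_self.1 hM.nonneg
  exact ⟨B, hB⟩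

lemma psd_trace_mul {ι : Type} [Fintype ι] [DecidableEq ι] (M Y : Matrix ι ι ℝ)
    (hM : M.PosSemidef) (hY : Y.PosSemidef) (h : (M * Y).trace ≤ 0) : M * Y = 0 := by
  obtain ⟨B, rfl⟩ := psd_exists_sqrt M hM
  obtain ⟨C, rfl⟩ := psd_exists_sqrt Y hY
  have e : (Bᴴ * B * (Cᴴ * C)).trace = ((B * Cᴴ)ᴴ * (B * Cᴴ)).trace := by
    rw [conjTranspose_mul, conjTranspose_conjTranspose, ← Matrix.mul_assoc, trace_mul_comm]
    simp only [Matrix.mul_assoc]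
  have hn : 0 ≤ ((B * Cᴴ)ᴴ * (B * Cᴴ)).trace :=
    (posSemidef_conjTranspose_mul_self (B * Cᴴ)).trace_nonneg
  have h0 : B * Cᴴ = 0 := by
    rw [← trace_conjTranspose_mul_self_eq_zero_iff]
    rw [e] at h
    exact le_antisymm h hn
  rw [Matrix.mul_assoc, ← Matrix.mul_assoc B, h0]
  simp

/-- First-order optimality for the maximization of `k`. -/
lemma exists_xbar {n : ℕ} (A : Matrix (Fin n) (Fin n) ℝ) (hA : A.IsHermitian)
    (a b : Fin n → ℝ) (c Δ : ℝ) (hΔ : 0 < Δ)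
    (ts ls : ℝ) (hls : 0 ≤ ls)
    (hmax : ∀ t l : ℝ, 0 ≤ l → ktl A a b c Δ t l ≤ ktl A a b c Δ ts ls)
    (heq : lambdaMin (borderD2 A a b ts ls) = lambdaMin A) :
    ∃ x : Fin n → ℝ,
      (A - lambdaMin A • (1 : Matrix (Fin n) (Fin n) ℝ)).mulVec x = a - (ls / 2) • b ∧
      x ⬝ᵥ x ≤ Δ ∧ b ⬝ᵥ x ≤ c ∧ (0 < ls → b ⬝ᵥ x = c) := by
  obtain ⟨hM, -⟩ := lambdaMin_spec _ (borderD2_isHermitian A hA a b ts ls)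
  set D := borderD2 A a b ts ls with hD
  set μ := lambdaMin D with hμ
  set M := D - μ • (1 : Matrix (Unit ⊕ Fin n) (Unit ⊕ Fin n) ℝ) with hMdef
  let S := {Y : Matrix (Unit ⊕ Fin n) (Unit ⊕ Fin n) ℝ | Y.PosSemidef ∧ Y.trace = 1}
  have hSc : IsCompact S := isCompact_density
  have hSconv : Convex ℝ S := by
    rintro X ⟨hX, hXt⟩ Y ⟨hY, hYt⟩ α β hα hβ hαβ
    refine ⟨(hX.smul hα).add (hY.smul hβ), ?_⟩
    rw [trace_add, trace_smul, trace_smul, hXt, hYt]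
    simpa using hαβ
  let F : Matrix (Unit ⊕ Fin n) (Unit ⊕ Fin n) ℝ → ℝ × ℝ × ℝ := fun Y =>
    ((Δ + 1) * Y (Sum.inl ()) (Sum.inl ()) - Y.trace,
      (Δ + 1) * (∑ i, b i * Y (Sum.inr i) (Sum.inl ())) - c * Y.trace, (M * Y).trace)
  have hFlin : IsLinearMap ℝ F := by
    constructor
    · intro X Y
      simp only [F, Matrix.mul_add M, Prod.mk_add_mk, trace_add, Matrix.add_apply, mul_add,
        Finset.sum_add_distrib, Prod.mk.injEq, and_true]
      constructor <;> ring
    · intro r Y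
      simp only [F, Prod.smul_mk, trace_smul, Matrix.smul_apply, smul_eq_mul, Matrix.mul_smul,
        Prod.mk.injEq, and_true]
      have : ∑ i, b i * (r * Y (Sum.inr i) (Sum.inl ())) =
        r * ∑ i, b i * Y (Sum.inr i) (Sum.inl ()) := by
        rw [Finset.mul_sum]; exact Finset.sum_congr rfl fun i _ => by ring
      rw [this]
      constructor <;> ring
  have hFcont : Continuous F := (hFlin.mk' F).continuous_of_finiteDimensional
  let T : Set (ℝ × ℝ × ℝ) := {p | p.1 = 0 ∧ p.2.1 ≤ 0 ∧ (0 < ls → p.2.1 = 0) ∧ p.2.2 ≤ 0}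
  have hTcl : IsClosed T := by
    have c1 : IsClosed {p : ℝ × ℝ × ℝ | p.1 = 0} := isClosed_eq (by fun_prop) (by fun_prop)
    have c2 : IsClosed {p : ℝ × ℝ × ℝ | p.2.1 ≤ 0} := isClosed_le (by fun_prop) (by fun_prop)
    have c3 : IsClosed {p : ℝ × ℝ × ℝ | p.2.2 ≤ 0} := isClosed_le (by fun_prop) (by fun_prop)
    have c4 : IsClosed {p : ℝ × ℝ × ℝ | 0 < ls → p.2.1 = 0} := by
      by_cases h : 0 < ls
      · have : {p : ℝ × ℝ × ℝ | 0 < ls → p.2.1 = 0} = {p | p.2.1 = 0} := by ext; simp [h]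
        exact this.symm ▸ isClosed_eq (by fun_prop) (by fun_prop)
      · have : {p : ℝ × ℝ × ℝ | 0 < ls → p.2.1 = 0} = Set.univ := by ext; simp [h]
        exact this ▸ isClosed_univ
    exact c1.inter (c2.inter (c4.inter c3))
  have hTconv : Convex ℝ T := by
    rintro p ⟨h1, h2, h3, h4⟩ q ⟨k1, k2, k3, k4⟩ α β hα hβ hαβ
    refine ⟨?_, ?_, ?_, ?_⟩
    · simp [h1, k1]
    · simp only [Prod.snd_add, Prod.smul_snd, Prod.fst_add, Prod.smul_fst, smul_eq_mul]
      nlinarith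
    · intro h
      simp [h3 h, k3 h]
    · simp only [Prod.snd_add, Prod.smul_snd, smul_eq_mul]
      nlinarith
  by_cases hdisj : Disjoint (F '' S) T
  · exfalso
    obtain ⟨f, u, v, hfu, huv, hfv⟩ := geometric_hahn_banach_compact_closed
      (hSconv.is_linear_image hFlin) (hSc.image hFcont) hTconv hTcl hdisj
    obtain ⟨τ, σ, ρ, hf⟩ : ∃ τ σ ρ : ℝ, ∀ p q r : ℝ, f (p, q, r) = -(τ * p + σ * q + ρ * r) := by
      refine ⟨-f (1, 0, 0), -f (0, 1, 0), -f (0, 0, 1), fun p q r => ?_⟩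
      have : (p, q, r) = p • ((1, 0, 0) : ℝ × ℝ × ℝ) + q • ((0, 1, 0) : ℝ × ℝ × ℝ)
        + r • ((0, 0, 1) : ℝ × ℝ × ℝ) := by simp
      rw [this, map_add, map_add, map_smul, map_smul, map_smul]
      simp only [smul_eq_mul]
      ring
    have hv0 : v < 0 := by
      have := hfv (0, 0, 0) ⟨rfl, le_rfl, fun _ => rfl, le_rfl⟩
      rw [hf] at this
      simpa using this
    have hρ : 0 ≤ ρ := by
      by_contra h
      push Not at h
      have := hfv (0, 0, v / (-ρ)) ⟨rfl, le_rfl, fun _ => rfl,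
        div_nonpos_of_nonpos_of_nonneg hv0.le (by linarith)⟩
      rw [hf] at this
      have hne : ρ ≠ 0 := h.ne
      have e : ρ * (v / (-ρ)) = -v := by field_simp
      rw [e] at this
      linarith
    have hσ : ls = 0 → 0 ≤ σ := by
      intro hl
      by_contra h
      push Not at h
      have := hfv (0, v / (-σ), 0) ⟨rfl,
        div_nonpos_of_nonpos_of_nonneg hv0.le (by linarith), fun h => by linarith, le_rfl⟩
      rw [hf] at this
      have hne : σ ≠ 0 := h.ne
      have e : σ * (v / (-σ)) = -v := by field_simp
      rw [e] at this
      linarith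
    obtain ⟨δ, hδ, hδρ, hδσ⟩ : ∃ δ : ℝ, 0 < δ ∧ δ * ρ ≤ Δ + 1 ∧ 0 ≤ ls + δ * σ := by
      have h2 : (Δ + 1) / (ρ + 1) * ρ ≤ Δ + 1 := by
        rw [div_mul_eq_mul_div, div_le_iff₀ (by linarith)]
        nlinarith
      rcases hls.eq_or_lt with h | h
      · refine ⟨(Δ + 1) / (ρ + 1), by positivity, h2, ?_⟩
        have := hσ h.symm
        positivity
      · refine ⟨min ((Δ + 1) / (ρ + 1)) (ls / (|σ| + 1)), by positivity, ?_, ?_⟩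
        · exact (mul_le_mul_of_nonneg_right (min_le_left _ _) hρ).trans h2
        · have h3 : ls / (|σ| + 1) * |σ| ≤ ls := by
            rw [div_mul_eq_mul_div, div_le_iff₀ (by positivity)]
            nlinarith
          have h4 := mul_le_mul_of_nonneg_right
            (min_le_right ((Δ + 1) / (ρ + 1)) (ls / (|σ| + 1))) (abs_nonneg σ)
          have hm : 0 < min ((Δ + 1) / (ρ + 1)) (ls / (|σ| + 1)) := by positivity
          have h5 := mul_le_mul_of_nonneg_left (neg_abs_le σ) hm.le
          linarith
    obtain ⟨-, w, hw1, hw⟩ := lambdaMin_spec _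
      (borderD2_isHermitian A hA a b (ts + δ * τ) (ls + δ * σ))
    have hk := hmax (ts + δ * τ) (ls + δ * σ) hδσ
    have hlam : lambdaMin (borderD2 A a b (ts + δ * τ) (ls + δ * σ)) =
        w ⬝ᵥ D.mulVec w + (δ * τ) * (w (Sum.inl ()) * w (Sum.inl ()))
        + (δ * σ) * ∑ i, b i * (w (Sum.inl ()) * w (Sum.inr i)) := by
      rw [← borderD2_shift, hw, dotProduct_smul, hw1, smul_eq_mul, mul_one]
    have hYS : vecMulVec w w ∈ S := by
      refine ⟨by simpa using posSemidef_vecMulVec_self_star w, ?_⟩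
      rw [trace_vecMulVec]; exact hw1
    have hlt := hfu _ (Set.mem_image_of_mem F hYS)
    have htr : (M * vecMulVec w w).trace = w ⬝ᵥ D.mulVec w - μ := by
      rw [mul_vecMulVec, trace_vecMulVec, dotProduct_comm, hMdef, sub_mulVec, smul_mulVec,
        one_mulVec, dotProduct_sub, dotProduct_smul, hw1, smul_eq_mul, mul_one]
    have hr : 0 ≤ w ⬝ᵥ D.mulVec w - μ := by
      have := hM.dotProduct_mulVec_nonneg w
      rw [star_trivial, hMdef, sub_mulVec, smul_mulVec,
        one_mulVec, dotProduct_sub, dotProduct_smul, hw1, smul_eq_mul, mul_one] at this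
      exact this
    have hsum : ∑ i, b i * (w (Sum.inr i) * w (Sum.inl ())) =
        ∑ i, b i * (w (Sum.inl ()) * w (Sum.inr i)) :=
      Finset.sum_congr rfl fun i _ => by ring
    simp only [F] at hlt
    rw [hf, htr, hYS.2] at hlt
    simp only [vecMulVec_apply] at hlt
    rw [hsum] at hlt
    unfold ktl at hk
    rw [hlam, ← hD, ← hμ] at hk
    set r := w ⬝ᵥ D.mulVec w - μ
    set B := ∑ i, b i * (w (Sum.inl ()) * w (Sum.inr i))
    set s2 := w (Sum.inl ()) * w (Sum.inl ())
    have e1 : w ⬝ᵥ D.mulVec w = r + μ := by simp [r]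
    rw [e1] at hk
    have h7 : 0 < τ * ((Δ + 1) * s2 - 1) + σ * ((Δ + 1) * B - c * 1) + ρ * r := by linarith
    have h8 := mul_pos hδ h7
    have h9 : δ * ρ * r ≤ (Δ + 1) * r := mul_le_mul_of_nonneg_right hδρ hr
    nlinarith
  · rw [Set.not_disjoint_iff] at hdisj
    obtain ⟨_, ⟨Y, ⟨hY, hYt⟩, rfl⟩, h1, h2, h3, h4⟩ := hdisj
    simp only [F] at h1 h2 h3 h4
    rw [hYt] at h1 h2 h3
    have hMY := psd_trace_mul M Y hM hY h4
    have hY00 : (Δ + 1) * Y (Sum.inl ()) (Sum.inl ()) = 1 := by linarith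
    have hbx : b ⬝ᵥ (fun i => (Δ + 1) * Y (Sum.inr i) (Sum.inl ())) =
        (Δ + 1) * ∑ i, b i * Y (Sum.inr i) (Sum.inl ()) := by
      rw [dotProduct, Finset.mul_sum]
      exact Finset.sum_congr rfl fun i _ => by ring
    refine ⟨fun i => (Δ + 1) * Y (Sum.inr i) (Sum.inl ()), ?_, ?_, ?_, ?_⟩
    · ext i
      rw [hMdef, Matrix.sub_mul, Matrix.smul_mul, Matrix.one_mul] at hMY
      have h := congrFun (congrFun hMY (Sum.inr i)) (Sum.inl ())
      simp only [hD, borderD2, borderD, Matrix.sub_apply, mul_apply,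
        Fintype.sum_sum_type, Finset.univ_unique, Finset.sum_singleton, fromBlocks_apply₂₁,
        fromBlocks_apply₂₂, of_apply, Matrix.smul_apply,
        Matrix.zero_apply, smul_eq_mul] at h
      have e : (default : Unit) = () := rfl
      rw [e] at h
      rw [sub_mulVec, smul_mulVec, one_mulVec]
      simp only [Pi.sub_apply, Pi.smul_apply, smul_eq_mul, mulVec, dotProduct]
      have hs : ∑ j, A i j * ((Δ + 1) * Y (Sum.inr j) (Sum.inl ())) =
          (Δ + 1) * ∑ j, A i j * Y (Sum.inr j) (Sum.inl ()) := by
        rw [Finset.mul_sum]; exact Finset.sum_congr rfl fun i _ => by ring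
      rw [hs, ← heq]
      linear_combination (Δ + 1) * h + (a i - ls / 2 * b i) * hY00
    · have ht2 : Y (Sum.inl ()) (Sum.inl ()) + ∑ i, Y (Sum.inr i) (Sum.inr i) = 1 := by
        rw [← hYt]; simp [Matrix.trace]
      have hle : ∑ i, Y (Sum.inr i) (Sum.inl ()) * Y (Sum.inr i) (Sum.inl ()) ≤
          Y (Sum.inl ()) (Sum.inl ()) * ∑ i, Y (Sum.inr i) (Sum.inr i) := by
        rw [Finset.mul_sum]
        exact Finset.sum_le_sum fun i _ => psd_minor Y hY _ _
      have e : (fun i => (Δ + 1) * Y (Sum.inr i) (Sum.inl ())) ⬝ᵥ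
          (fun i => (Δ + 1) * Y (Sum.inr i) (Sum.inl ())) = (Δ + 1) * (Δ + 1) *
          ∑ i, Y (Sum.inr i) (Sum.inl ()) * Y (Sum.inr i) (Sum.inl ()) := by
        rw [dotProduct, Finset.mul_sum]
        exact Finset.sum_congr rfl fun i _ => by ring
      rw [e]
      refine (mul_le_mul_of_nonneg_left hle (by positivity)).trans (le_of_eq ?_)
      linear_combination ((Δ + 1) * ∑ i, Y (Sum.inr i) (Sum.inr i) - 1) * hY00 + (Δ + 1) * ht2
    · rw [hbx]; linarith
    · intro h
      rw [hbx]; linarith [h3 h]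
lemma kkt_optimal {n : ℕ} (A : Matrix (Fin n) (Fin n) ℝ) (a b : Fin n → ℝ) (c Δ μ ls : ℝ)
    (hM : (A - μ • (1 : Matrix (Fin n) (Fin n) ℝ)).PosSemidef) (hμ : μ ≤ 0) (hls : 0 ≤ ls)
    (x : Fin n → ℝ)
    (hx : (A - μ • (1 : Matrix (Fin n) (Fin n) ℝ)).mulVec x = a - (ls / 2) • b)
    (h1 : x ⬝ᵥ x ≤ Δ) (h2 : b ⬝ᵥ x ≤ c) (h3 : μ * (x ⬝ᵥ x - Δ) = 0)
    (h4 : ls * (b ⬝ᵥ x - c) = 0) :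
    pstar A a b c Δ = dstar A a b c Δ ∧ isOptimal A a b c Δ x := by
  have key : ∀ y : Fin n → ℝ, objQ A a x ≤ lagr A a b c Δ y (-μ) ls := by
    intro y
    have hs : x ⬝ᵥ (A - μ • (1 : Matrix (Fin n) (Fin n) ℝ)).mulVec y =
        y ⬝ᵥ (A - μ • (1 : Matrix (Fin n) (Fin n) ℝ)).mulVec x := by
      rw [dotProduct_mulVec, ← mulVec_transpose, dotProduct_comm]
      have : (A - μ • (1 : Matrix (Fin n) (Fin n) ℝ))ᵀ = A - μ • 1 := by
        simpa only [conjTranspose_eq_transpose_of_trivial] using hM.1.eq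
      rw [this]
    have hp := hM.dotProduct_mulVec_nonneg (y - x)
    rw [star_trivial, mulVec_sub, sub_dotProduct, dotProduct_sub, dotProduct_sub, hs, hx] at hp
    have ex : x ⬝ᵥ (A - μ • (1 : Matrix (Fin n) (Fin n) ℝ)).mulVec x =
        x ⬝ᵥ (a - (ls / 2) • b) := by rw [hx]
    have ey : y ⬝ᵥ (A - μ • (1 : Matrix (Fin n) (Fin n) ℝ)).mulVec y =
        y ⬝ᵥ A.mulVec y - μ * (y ⬝ᵥ y) := by
      rw [sub_mulVec, smul_mulVec, one_mulVec, dotProduct_sub, dotProduct_smul, smul_eq_mul]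
    rw [sub_mulVec, smul_mulVec, one_mulVec, dotProduct_sub, dotProduct_smul, smul_eq_mul] at ex
    rw [ey] at hp
    simp only [dotProduct_sub, dotProduct_smul, smul_eq_mul, dotProduct_comm _ a,
      dotProduct_comm _ b] at hp ex
    unfold lagr objQ
    linarith
  have hopt : ∀ y : Fin n → ℝ, y ⬝ᵥ y ≤ Δ → b ⬝ᵥ y ≤ c → objQ A a x ≤ objQ A a y := by
    intro y hy1 hy2
    refine (key y).trans ?_
    unfold lagr
    nlinarith
  refine ⟨?_, h1, h2, hopt⟩
  have hp : pstar A a b c Δ = objQ A a x := by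
    apply IsLeast.csInf_eq
    refine ⟨⟨x, h1, h2, rfl⟩, ?_⟩
    rintro v ⟨y, hy1, hy2, rfl⟩
    exact hopt y hy1 hy2
  have hd : dstar A a b c Δ = objQ A a x := by
    apply IsGreatest.csSup_eq
    refine ⟨⟨-μ, ls, by linarith, hls, key⟩, ?_⟩
    rintro v ⟨l1, l2, hl1, hl2, h⟩
    refine (h x).trans ?_
    unfold lagr
    nlinarith
  rw [hp, hd]

lemma dot_self_nonneg' {n : ℕ} (w : Fin n → ℝ) : 0 ≤ w ⬝ᵥ w :=
  Finset.sum_nonneg fun j _ => mul_self_nonneg (w j)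

lemma dot_self_pos' {n : ℕ} (w : Fin n → ℝ) (hw : w ≠ 0) : 0 < w ⬝ᵥ w := by
  rcases (dot_self_nonneg' w).lt_or_eq with h | h
  · exact h
  · exact absurd (dotProduct_self_eq_zero.1 h.symm) hw

lemma to_sphere {n : ℕ} (x d : Fin n → ℝ) (Δ : ℝ) (hd : d ≠ 0) (hx : x ⬝ᵥ x < Δ) :
    ∃ α : ℝ, 0 < α ∧ (x + α • d) ⬝ᵥ (x + α • d) = Δ := by
  have hq := dot_self_pos' d hd
  set q := d ⬝ᵥ d
  set h := x ⬝ᵥ d with hh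
  have hpos : 0 < h ^ 2 + q * (Δ - x ⬝ᵥ x) := by
    have : 0 < q * (Δ - x ⬝ᵥ x) := mul_pos hq (by linarith)
    positivity
  have hs := Real.sq_sqrt hpos.le
  have hlt : h < Real.sqrt (h ^ 2 + q * (Δ - x ⬝ᵥ x)) := by
    apply Real.lt_sqrt_of_sq_lt
    have : 0 < q * (Δ - x ⬝ᵥ x) := mul_pos hq (by linarith)
    linarith
  set r := Real.sqrt (h ^ 2 + q * (Δ - x ⬝ᵥ x))
  refine ⟨(r - h) / q, div_pos (by linarith) hq, ?_⟩
  simp only [add_dotProduct, dotProduct_add, smul_dotProduct, dotProduct_smul, smul_eq_mul,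
    dotProduct_comm d x]
  change x ⬝ᵥ x + (r - h) / q * h + (r - h) / q * (h + (r - h) / q * q) = Δ
  have hq0 := hq.ne'
  field_simp
  linear_combination hs

/-- Theorem 4, item 2.2. -/
theorem stmt12 {n : ℕ} (hn : 1 ≤ n) (A : Matrix (Fin n) (Fin n) ℝ) (hA : A.IsHermitian)
    (hnpd : ¬ A.PosDef) (a b : Fin n → ℝ) (c Δ : ℝ) (hΔ : 0 < Δ)
    (hslater : ∃ x : Fin n → ℝ, x ⬝ᵥ x < Δ ∧ b ⬝ᵥ x < c)
    (ts ls : ℝ) (hls : 0 ≤ ls)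
    (hmax : ∀ t l : ℝ, 0 ≤ l → ktl A a b c Δ t l ≤ ktl A a b c Δ ts ls)
    (heq : lambdaMin (borderD2 A a b ts ls) = lambdaMin A)
    (y : Unit ⊕ Fin n → ℝ) (hy1 : y ⬝ᵥ y = 1)
    (hy : (borderD2 A a b ts ls).mulVec y = lambdaMin (borderD2 A a b ts ls) • y)
    (hy0 : y (Sum.inl ()) ≠ 0)
    (hnot : ¬ (lambdaMin A < 0 ∧ eigMult A = 1 ∧ 0 < ls ∧
      ∃ x1 x2 : Fin n → ℝ,
        (A - lambdaMin A • (1 : Matrix (Fin n) (Fin n) ℝ)).mulVec x1 = a - (ls / 2) • b ∧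
        (A - lambdaMin A • (1 : Matrix (Fin n) (Fin n) ℝ)).mulVec x2 = a - (ls / 2) • b ∧
        x1 ⬝ᵥ x1 = Δ ∧ x2 ⬝ᵥ x2 = Δ ∧ (b ⬝ᵥ x1 - c) * (b ⬝ᵥ x2 - c) < 0)) :
    pstar A a b c Δ = dstar A a b c Δ ∧
    ∃ z : Fin n → ℝ,
      (A - lambdaMin A • (1 : Matrix (Fin n) (Fin n) ℝ)).mulVec z = 0 ∧
      isOptimal A a b c Δ ((fun i => y (Sum.inr i) / y (Sum.inl ())) + z) := by
  have hne : Nonempty (Fin n) := ⟨⟨0, hn⟩⟩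
  obtain ⟨hM, u, hu1, hu⟩ := lambdaMin_spec A hA
  obtain ⟨x, hx, hxΔ, hxc, hxls⟩ := exists_xbar A hA a b c Δ hΔ ts ls hls hmax heq
  have hμ : lambdaMin A ≤ 0 := by
    by_contra h
    push Not at h
    apply hnpd
    refine .of_dotProduct_mulVec_pos hA fun v hv => ?_
    have h1 := hM.dotProduct_mulVec_nonneg v
    have h2 := mul_pos h (dot_self_pos' v hv)
    rw [star_trivial] at h1 ⊢
    rw [sub_mulVec, smul_mulVec, one_mulVec, dotProduct_sub, dotProduct_smul, smul_eq_mul] at h1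
    linarith
  have hxs : (A - lambdaMin A • (1 : Matrix (Fin n) (Fin n) ℝ)).mulVec
      (fun i => y (Sum.inr i) / y (Sum.inl ())) = a - (ls / 2) • b := by
    ext i
    have h := congrFun hy (Sum.inr i)
    rw [heq] at h
    simp only [borderD2, borderD, mulVec, dotProduct, Fintype.sum_sum_type, Finset.univ_unique,
      Finset.sum_singleton, fromBlocks_apply₂₁, fromBlocks_apply₂₂, of_apply, Pi.smul_apply,
      smul_eq_mul] at h
    have e : (default : Unit) = () := rfl
    rw [e] at h
    rw [sub_mulVec, smul_mulVec, one_mulVec]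
    simp only [Pi.sub_apply, Pi.smul_apply, smul_eq_mul, mulVec, dotProduct]
    have hs : ∑ j, A i j * (y (Sum.inr j) / y (Sum.inl ())) =
        (∑ j, A i j * y (Sum.inr j)) / y (Sum.inl ()) := by
      rw [Finset.sum_div]; exact Finset.sum_congr rfl fun i _ => by ring
    rw [hs]
    field_simp
    linear_combination 2 * h
  suffices hsuff : ∃ x' : Fin n → ℝ,
      (A - lambdaMin A • (1 : Matrix (Fin n) (Fin n) ℝ)).mulVec x' = a - (ls / 2) • b ∧
      x' ⬝ᵥ x' ≤ Δ ∧ b ⬝ᵥ x' ≤ c ∧ lambdaMin A * (x' ⬝ᵥ x' - Δ) = 0 ∧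
      ls * (b ⬝ᵥ x' - c) = 0 by
    obtain ⟨x', k1, k2, k3, k4, k5⟩ := hsuff
    obtain ⟨r1, r2⟩ := kkt_optimal A a b c Δ (lambdaMin A) ls hM hμ hls x' k1 k2 k3 k4 k5
    refine ⟨r1, x' - (fun i => y (Sum.inr i) / y (Sum.inl ())), ?_, ?_⟩
    · rw [mulVec_sub, k1, hxs, sub_self]
    · rw [add_sub_cancel]
      exact r2
  have hls0 : ls * (b ⬝ᵥ x - c) = 0 := by
    rcases hls.eq_or_lt with h | h
    · rw [← h, zero_mul]
    · rw [hxls h, sub_self, mul_zero]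
  rcases hμ.eq_or_lt with hμ0 | hμ0
  · exact ⟨x, hx, hxΔ, hxc, by rw [hμ0, zero_mul], hls0⟩
  rcases hxΔ.eq_or_lt with hxe | hxlt
  · exact ⟨x, hx, hxΔ, hxc, by rw [hxe, sub_self, mul_zero], hls0⟩
  have hmove : ∀ (d : Fin n → ℝ) (α : ℝ),
      (A - lambdaMin A • (1 : Matrix (Fin n) (Fin n) ℝ)).mulVec d = 0 →
      (A - lambdaMin A • (1 : Matrix (Fin n) (Fin n) ℝ)).mulVec (x + α • d) =
        a - (ls / 2) • b := by
    intro d α hd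
    rw [mulVec_add, mulVec_smul, hd, smul_zero, add_zero, hx]
  have hmoveb : ∀ (d : Fin n → ℝ) (α : ℝ), b ⬝ᵥ (x + α • d) = b ⬝ᵥ x + α * (b ⬝ᵥ d) := by
    intro d α
    rw [dotProduct_add, dotProduct_smul, smul_eq_mul]
  by_cases hd : ∃ d : Fin n → ℝ, d ≠ 0 ∧
      (A - lambdaMin A • (1 : Matrix (Fin n) (Fin n) ℝ)).mulVec d = 0 ∧ b ⬝ᵥ d = 0
  · obtain ⟨d, hd0, hdN, hdb⟩ := hd
    obtain ⟨α, -, hα⟩ := to_sphere x d Δ hd0 hxlt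
    have hb : b ⬝ᵥ (x + α • d) = b ⬝ᵥ x := by rw [hmoveb, hdb, mul_zero, add_zero]
    exact ⟨x + α • d, hmove d α hdN, hα.le, hb ▸ hxc, by rw [hα, sub_self, mul_zero],
      by rw [hb, hls0]⟩
  have hu0 : u ≠ 0 := by
    rintro rfl
    simp at hu1
  have huN : (A - lambdaMin A • (1 : Matrix (Fin n) (Fin n) ℝ)).mulVec u = 0 := by
    rw [sub_mulVec, smul_mulVec, one_mulVec, hu, sub_self]
  have hbu : b ⬝ᵥ u ≠ 0 := fun h => hd ⟨u, hu0, huN, h⟩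
  have hnN : (A - lambdaMin A • (1 : Matrix (Fin n) (Fin n) ℝ)).mulVec (-u) = 0 := by
    rw [mulVec_neg, huN, neg_zero]
  rcases hls.eq_or_lt with h0 | h0
  · -- move in the direction decreasing b
    obtain ⟨d, hd0, hdN, hdb⟩ : ∃ d : Fin n → ℝ, d ≠ 0 ∧
        (A - lambdaMin A • (1 : Matrix (Fin n) (Fin n) ℝ)).mulVec d = 0 ∧ b ⬝ᵥ d ≤ 0 := by
      rcases le_total (b ⬝ᵥ u) 0 with h | h
      · exact ⟨u, hu0, huN, h⟩
      · exact ⟨-u, neg_ne_zero.2 hu0, hnN, by rw [dotProduct_neg]; linarith⟩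
    obtain ⟨α, hα0, hα⟩ := to_sphere x d Δ hd0 hxlt
    refine ⟨x + α • d, hmove d α hdN, hα.le, ?_, by rw [hα, sub_self, mul_zero],
      by rw [← h0, zero_mul]⟩
    rw [hmoveb]
    nlinarith
  · exfalso
    apply hnot
    obtain ⟨α, hα0, hα⟩ := to_sphere x u Δ hu0 hxlt
    obtain ⟨β, hβ0, hβ⟩ := to_sphere x (-u) Δ (neg_ne_zero.2 hu0) hxlt
    refine ⟨hμ0, ?_, h0, x + α • u, x + β • (-u), hmove _ _ huN, hmove _ _ hnN, hα, hβ, ?_⟩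
    · unfold eigMult
      rw [finrank_eq_one_iff']
      refine ⟨⟨u, huN⟩, fun h => hu0 (congrArg Subtype.val h), ?_⟩
      rintro ⟨w, hw⟩
      have hw : (A - lambdaMin A • (1 : Matrix (Fin n) (Fin n) ℝ)).mulVec w = 0 := hw
      refine ⟨(b ⬝ᵥ w) / (b ⬝ᵥ u), Subtype.ext ?_⟩
      by_contra hne'
      apply hd
      refine ⟨((b ⬝ᵥ w) / (b ⬝ᵥ u)) • u - w, fun h => hne' (sub_eq_zero.1 h), ?_, ?_⟩
      · rw [mulVec_sub, mulVec_smul, huN, hw, smul_zero, sub_zero]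
      · rw [dotProduct_sub, dotProduct_smul, smul_eq_mul, div_mul_cancel₀ _ hbu, sub_self]
    · rw [hmoveb, hmoveb, hxls h0, dotProduct_neg]
      have : 0 < α * β * (b ⬝ᵥ u) ^ 2 := by positivity
      nlinarith
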